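/- Let U ⊆ ℝ² be a connected and simply connected open set with coordinates (u, v), and let θ : U → ℝ be a smooth function satisfying the sinh-Gordon equation θ_{uu} + θ_{vv} = −4 sinh θ. Then there exists a front (f, ν) on U with values in ℝ³, without umbilic points, whose fundamental forms are: ⟨f_u, f_u⟩ = 4 cosh²(θ/2), ⟨f_u, f_v⟩ = 0, ⟨f_v, f_v⟩ = 4 sinh²(θ/2); ⟨f_u, ν_u⟩ = −2 sinh θ, ⟨f_u, ν_v⟩ = ⟨f_v, ν_u⟩ = 0, ⟨f_v, ν_v⟩ = −2 sinh θ (so II = 4 cosh(θ/2) sinh(θ/2)(du² + dv²)); ⟨ν_u, ν_u⟩ = 4 sinh²(θ/2), ⟨ν_u, ν_v⟩ = 0, ⟨ν_v, ν_v⟩ = 4 cosh²(θ/2). In particular, the singular set of f is Σ = {q ∈ U : θ(q) = 0} and at every regular point the Gaussian curvature of f equals 1, i.e. (II(∂_u,∂_u)II(∂_v,∂_v) − II(∂_u,∂_v)²)/(I(∂_u,∂_u)I(∂_v,∂_v) − I(∂_u,∂_v)²) = 1 on U∖Σ. -/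

import Mathlib

open scoped Matrix

noncomputable section

/-- Partial derivative of a vector-valued map in the `k`-th coordinate direction. -/
def pd {m N : ℕ} (k : Fin m) (f : (Fin m → ℝ) → (Fin N → ℝ)) :
    (Fin m → ℝ) → (Fin N → ℝ) :=
  fun q => fderiv ℝ f q (Pi.single k 1)

/-- Partial derivative of a scalar function in the `k`-th coordinate direction. -/
def pdr {m : ℕ} (k : Fin m) (g : (Fin m → ℝ) → ℝ) : (Fin m → ℝ) → ℝ :=
  fun q => fderiv ℝ g q (Pi.single k 1)

/-!
Encode a surface by its position together with an orthonormal frame; prescribing the frame's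
structure forms turns the problem into a linear total differential equation `dY = A Y`. For the
frame adapted to the curvature lines, with principal lengths `2 cosh (θ/2)` and `2 sinh (θ/2)`, the
sinh-Gordon equation is exactly the flatness condition `dA = A ∧ A`.

Near a point, a flat system is solved by integrating it along rays. Flatness makes the defect
between the radial solution and its first-order approximation satisfy a differential inequality with
quadratically small forcing, so Grönwall's inequality shows that the radial solution solves the
whole system. Two invertible local solutions differ by a locally constant factor, so parallel
sections lift the identity through a covering map, and exist globally since `U` is simply connected.
Skewness of the connection forms keeps the frame orthonormal.
-/

section LinearTotalDifferentialEquations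

open Set Filter Topology Metric
open scoped RightActions

variable {E F R : Type*} [NormedAddCommGroup E] [NormedSpace ℝ E]
  [NormedAddCommGroup F] [NormedSpace ℝ F] [NormedRing R] [NormedAlgebra ℝ R]

/-- `Y` solves the total differential equation `dY = A Y` on `U`; geometrically, `Y` is a parallel
section for the connection form `A`. -/
def IsParallelOn (A : E → E →L[ℝ] R) (Y : E → R) (U : Set E) : Prop :=
  ∀ p ∈ U, HasFDerivAt Y (A p <• Y p) p

/-- Flatness `dA = A ∧ A` of the connection form `A` on `U`: the integrability condition of
`dY = A Y`, with the subtractions moved across. -/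
def IsFlatOn (A : E → E →L[ℝ] R) (U : Set E) : Prop :=
  ∀ p ∈ U, ∀ h k, fderiv ℝ A p h k + A p k * A p h = fderiv ℝ A p k h + A p h * A p k

/-- The quantitative form of `C^{1,1}` regularity used in the estimates: `A` and its derivative are
bounded by `M` on `s`, and the derivative is `M`-Lipschitz there. -/
structure HasC11BoundOn (A : E → F) (s : Set E) (M : ℝ) : Prop where
  differentiableAt : ∀ p ∈ s, DifferentiableAt ℝ A p
  norm_le : ∀ p ∈ s, ‖A p‖ ≤ M
  norm_fderiv_le : ∀ p ∈ s, ‖fderiv ℝ A p‖ ≤ M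
  norm_fderiv_sub_le : ∀ p ∈ s, ∀ p' ∈ s, ‖fderiv ℝ A p - fderiv ℝ A p'‖ ≤ M * ‖p - p'‖

/-- `y` solves `dY = A Y` along the ray `t ↦ q₀ + t • x`, `0 ≤ t ≤ 1`, with initial value `1`. -/
structure IsRadialSolution (A : E → E →L[ℝ] R) (q₀ x : E) (y : ℝ → R) : Prop where
  apply_zero : y 0 = 1
  hasDerivWithinAt : ∀ t ∈ Icc (0 : ℝ) 1,
    HasDerivWithinAt y (A (q₀ + t • x) x * y t) (Icc 0 1) t

lemma exists_hasC11BoundOn_ball {A : E → F} {q : E} (hA : ContDiffAt ℝ 2 A q) :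
    ∃ r > 0, ∃ M, HasC11BoundOn A (ball q r) M := by
  have hA' : ContDiffAt ℝ 1 (fderiv ℝ A) q := hA.fderiv_right (by norm_num)
  obtain ⟨K, s, hs, hK⟩ := hA'.exists_lipschitzOnWith
  have bound : ∀ᶠ p in 𝓝 q, ‖A p‖ < ‖A q‖ + 1 :=
    hA.continuousAt.norm.eventually_lt_const (lt_add_one _)
  have bound' : ∀ᶠ p in 𝓝 q, ‖fderiv ℝ A p‖ < ‖fderiv ℝ A q‖ + 1 :=
    hA'.continuousAt.norm.eventually_lt_const (lt_add_one _)
  have hdiff : ∀ᶠ p in 𝓝 q, DifferentiableAt ℝ A p :=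
    (hA.eventually (by simp)).mono fun p hp => hp.differentiableAt two_ne_zero
  obtain ⟨r, hr, hball⟩ := Metric.eventually_nhds_iff_ball.1
    ((eventually_mem_set.2 hs).and (hdiff.and (bound.and bound')))
  obtain ⟨M, hKM, hM, hM'⟩ :
      ∃ M : ℝ, K ≤ M ∧ ‖A q‖ + 1 ≤ M ∧ ‖fderiv ℝ A q‖ + 1 ≤ M :=
    ⟨max K (max (‖A q‖ + 1) (‖fderiv ℝ A q‖ + 1)), by simp⟩
  refine ⟨r, hr, M, fun p hp => (hball p hp).2.1, fun p hp => (hball p hp).2.2.1.le.trans hM,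
    fun p hp => (hball p hp).2.2.2.le.trans hM', fun p hp p' hp' => ?_⟩
  exact (hK.norm_sub_le (hball p hp).1 (hball p' hp').1).trans (by gcongr)

namespace HasC11BoundOn

variable {A : E → F} {s t : Set E} {M : ℝ} {p k : E}

lemma mono (hA : HasC11BoundOn A s M) (hts : t ⊆ s) : HasC11BoundOn A t M where
  differentiableAt p hp := hA.differentiableAt p (hts hp)
  norm_le p hp := hA.norm_le p (hts hp)
  norm_fderiv_le p hp := hA.norm_fderiv_le p (hts hp)
  norm_fderiv_sub_le p hp p' hp' := hA.norm_fderiv_sub_le p (hts hp) p' (hts hp')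

lemma norm_sub_le (hA : HasC11BoundOn A s M) (hs : Convex ℝ s) (hp : p ∈ s) (hk : p + k ∈ s) :
    ‖A (p + k) - A p‖ ≤ M * ‖k‖ := by
  simpa using hs.norm_image_sub_le_of_norm_fderiv_le hA.differentiableAt hA.norm_fderiv_le hp hk

lemma norm_sub_sub_fderiv_le (hA : HasC11BoundOn A s M) (hs : Convex ℝ s) (hp : p ∈ s)
    (hk : p + k ∈ s) : ‖A (p + k) - A p - fderiv ℝ A p k‖ ≤ M * ‖k‖ * ‖k‖ := by
  have hsub : segment ℝ p (p + k) ⊆ s := hs.segment_subset hp hk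
  have hM : 0 ≤ M := (norm_nonneg _).trans (hA.norm_le p hp)
  have variation : ∀ z ∈ segment ℝ p (p + k), ‖fderiv ℝ A z - fderiv ℝ A p‖ ≤ M * ‖k‖ := by
    intro z hz
    calc ‖fderiv ℝ A z - fderiv ℝ A p‖ ≤ M * ‖z - p‖ :=
          hA.norm_fderiv_sub_le z (hsub hz) p hp
      _ ≤ M * ‖k‖ := by
          gcongr
          simpa using norm_sub_le_of_mem_segment hz
  simpa using (convex_segment p (p + k)).norm_image_sub_le_of_norm_fderiv_le'
    (fun z hz => hA.differentiableAt z (hsub hz)) variation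
    (left_mem_segment ℝ p (p + k)) (right_mem_segment ℝ p (p + k))

end HasC11BoundOn

lemma exists_linear_ode_solution [CompleteSpace R] {a : ℝ → R} (ha : ContinuousOn a (Icc 0 1))
    (hbound : ∀ t ∈ Icc (0 : ℝ) 1, ‖a t‖ ≤ 1 / 2) (y₀ : R) :
    ∃ y : ℝ → R, y 0 = y₀ ∧
      ∀ t ∈ Icc (0 : ℝ) 1, HasDerivWithinAt y (a t * y t) (Icc 0 1) t := by
  have picardLindelof : IsPicardLindelof (fun t z => a t * z)
      (⟨0, by simp⟩ : Icc (0 : ℝ) 1) y₀ ‖y₀‖₊ 0 ‖y₀‖₊ (1 / 2) := by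
    refine ⟨fun t ht => LipschitzOnWith.of_dist_le_mul fun z _ w _ => ?_,
      fun z _ => ha.mul continuousOn_const, fun t ht z hz => ?_, by simp⟩
    · rw [dist_eq_norm, dist_eq_norm, ← mul_sub]
      refine (norm_mul_le _ _).trans ?_
      gcongr
      simpa using hbound t ht
    · have hz₂ : ‖z‖ ≤ 2 * ‖y₀‖ := by
        rw [mem_closedBall, dist_eq_norm, coe_nnnorm] at hz
        linarith [norm_le_norm_add_norm_sub' z y₀]
      calc ‖a t * z‖ ≤ 1 / 2 * (2 * ‖y₀‖) := norm_mul_le_of_le (hbound t ht) hz₂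
        _ = ‖y₀‖ := by ring
  exact picardLindelof.exists_eq_forall_mem_Icc_hasDerivWithinAt₀

lemma exists_isRadialSolution [CompleteSpace R] {A : E → E →L[ℝ] R} {B : Set E} {M : ℝ} {q₀ x : E}
    (hB : Convex ℝ B) (hA : HasC11BoundOn A B M) (hq₀ : q₀ ∈ B) (hx : q₀ + x ∈ B)
    (hsmall : M * ‖x‖ ≤ 1 / 2) : ∃ y, IsRadialSolution A q₀ x y := by
  have hcont : ContinuousOn (fun t : ℝ => A (q₀ + t • x) x) (Icc 0 1) := by
    refine ContinuousOn.clm_apply (fun t ht => ?_) continuousOn_const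
    exact ((hA.differentiableAt _ (hB.add_smul_mem hq₀ hx ht)).continuousAt.comp
      (f := fun t : ℝ => q₀ + t • x) (by fun_prop)).continuousWithinAt
  have hbound : ∀ t ∈ Icc (0 : ℝ) 1, ‖A (q₀ + t • x) x‖ ≤ 1 / 2 := fun t ht =>
    ((A _).le_of_opNorm_le (hA.norm_le _ (hB.add_smul_mem hq₀ hx ht)) x).trans hsmall
  obtain ⟨y, hy₀, hy⟩ := exists_linear_ode_solution hcont hbound 1
  exact ⟨y, hy₀, hy⟩

lemma IsRadialSolution.apply_one_of_zero {A : E → E →L[ℝ] R} {q₀ : E} {y : ℝ → R}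
    (hy : IsRadialSolution A q₀ 0 y) : y 1 = 1 := by
  have hder : ∀ t ∈ Icc (0 : ℝ) 1, HasDerivWithinAt y 0 (Icc 0 1) t := by
    simpa using hy.hasDerivWithinAt
  rw [← hy.apply_zero]
  exact constant_of_has_deriv_right_zero (fun t ht => (hder t ht).continuousWithinAt)
    (fun t ht => (hder t (Ico_subset_Icc_self ht)).mono_of_mem_nhdsWithin
      (Icc_mem_nhdsGE_of_mem ht)) 1 (by simp)

/-- The failure at time `t` of the first-order approximation `(1 + A(q₀ + t x)(t h)) y t` to the
radial solution `z` in the direction `x + h`, when `y` is the radial solution in direction `x`. -/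
def radialDefect (A : E → E →L[ℝ] R) (q₀ x h : E) (y z : ℝ → R) (t : ℝ) : R :=
  z t - y t - A (q₀ + t • x) (t • h) * y t

lemma IsRadialSolution.hasDerivWithinAt_radialDefect {A : E → E →L[ℝ] R} {q₀ x h : E} {y z : ℝ → R}
    (hy : IsRadialSolution A q₀ x y) (hz : IsRadialSolution A q₀ (x + h) z) {t : ℝ}
    (ht : t ∈ Icc (0 : ℝ) 1) (hA : DifferentiableAt ℝ A (q₀ + t • x)) :
    HasDerivWithinAt (radialDefect A q₀ x h y z)
      (A (q₀ + t • x + t • h) (x + h) * z t - A (q₀ + t • x) x * y t -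
        ((fderiv ℝ A (q₀ + t • x) x (t • h) + A (q₀ + t • x) h) * y t +
          A (q₀ + t • x) (t • h) * (A (q₀ + t • x) x * y t))) (Icc 0 1) t := by
  have ray : HasDerivAt (fun t : ℝ => q₀ + t • x) x t := by
    simpa using ((hasDerivAt_id t).smul_const x).const_add q₀
  have increment : HasDerivAt (fun t : ℝ => t • h) h t := by
    simpa using (hasDerivAt_id t).smul_const h
  have coefficient : HasDerivAt (fun t : ℝ => A (q₀ + t • x)) (fderiv ℝ A (q₀ + t • x) x) t :=
    hA.hasFDerivAt.comp_hasDerivAt t ray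
  have hz' := hz.hasDerivWithinAt t ht
  rw [smul_add, ← add_assoc] at hz'
  exact (hz'.sub (hy.hasDerivWithinAt t ht)).sub
    ((coefficient.clm_apply increment).hasDerivWithinAt.mul (hy.hasDerivWithinAt t ht))

-- Flatness cancels the terms of first order in `k`; all that is left besides the multiple of the
-- defect itself is of second order in `h` and `k`.
lemma radialDefect_deriv_eq {P Q : E →L[ℝ] R} {D : E →L[ℝ] E →L[ℝ] R} {x h k : E}
    (flat : D x k + P k * P x = D k x + P x * P k) (y z : R) :
    Q (x + h) * z - P x * y - ((D x k + P h) * y + P k * (P x * y)) =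
      Q (x + h) * (z - y - P k * y) + ((Q - P - D k) (x + h) + D k h) * y +
        ((Q - P) (x + h) + P h) * (P k * y) := by
  have hDxk : D x k = D k x + P x * P k - P k * P x := eq_sub_of_add_eq flat
  simp only [hDxk, _root_.sub_apply, map_add]
  noncomm_ring

lemma norm_radialDefect_deriv_le {P Q : E →L[ℝ] R} {D : E →L[ℝ] E →L[ℝ] R} {x h k : E} {M C : ℝ}
    (flat : D x k + P k * P x = D k x + P x * P k)
    (hP : ‖P‖ ≤ M) (hQ : ‖Q‖ ≤ M) (hD : ‖D‖ ≤ M) (hQP : ‖Q - P‖ ≤ M * ‖k‖)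
    (hQPD : ‖Q - P - D k‖ ≤ M * ‖k‖ * ‖k‖) (hk : ‖k‖ ≤ ‖h‖) (hxh : ‖x + h‖ ≤ 1)
    {y : R} (z : R) (hy : ‖y‖ ≤ C) :
    ‖Q (x + h) * z - P x * y - ((D x k + P h) * y + P k * (P x * y))‖ ≤
      M * ‖z - y - P k * y‖ + (2 * M * C + 2 * M * M * C) * ‖h‖ ^ 2 := by
  have hM : 0 ≤ M := (norm_nonneg P).trans hP
  have hPk : ‖P k‖ ≤ M * ‖h‖ := P.le_of_opNorm_le_of_le hP hk
  have linear : ‖Q (x + h)‖ ≤ M := by simpa using Q.le_of_opNorm_le_of_le hQ hxh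
  have quadratic : ‖(Q - P - D k) (x + h) + D k h‖ ≤ M * ‖h‖ ^ 2 + M * ‖h‖ ^ 2 := by
    refine norm_add_le_of_le ?_ ?_
    · calc ‖(Q - P - D k) (x + h)‖ ≤ M * ‖k‖ * ‖k‖ * 1 :=
            (Q - P - D k).le_of_opNorm_le_of_le hQPD hxh
        _ ≤ M * ‖h‖ * ‖h‖ * 1 := by gcongr
        _ = M * ‖h‖ ^ 2 := by ring
    · calc ‖D k h‖ ≤ M * ‖k‖ * ‖h‖ := (D k).le_of_opNorm_le (D.le_of_opNorm_le hD k) h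
        _ ≤ M * ‖h‖ * ‖h‖ := by gcongr
        _ = M * ‖h‖ ^ 2 := by ring
  have mixed : ‖(Q - P) (x + h) + P h‖ ≤ M * ‖h‖ + M * ‖h‖ := by
    refine norm_add_le_of_le ?_ (P.le_of_opNorm_le hP h)
    calc ‖(Q - P) (x + h)‖ ≤ M * ‖k‖ * 1 := (Q - P).le_of_opNorm_le_of_le hQP hxh
      _ ≤ M * ‖h‖ * 1 := by gcongr
      _ = M * ‖h‖ := mul_one _
  rw [radialDefect_deriv_eq flat]
  calc ‖_ + _ + _‖ ≤ M * ‖z - y - P k * y‖ + (M * ‖h‖ ^ 2 + M * ‖h‖ ^ 2) * C +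
        (M * ‖h‖ + M * ‖h‖) * (M * ‖h‖ * C) :=
        norm_add_le_of_le
          (norm_add_le_of_le (norm_mul_le_of_le linear le_rfl) (norm_mul_le_of_le quadratic hy))
          (norm_mul_le_of_le mixed (norm_mul_le_of_le hPk hy))
    _ = _ := by ring

lemma IsRadialSolution.norm_sub_sub_le {A : E → E →L[ℝ] R} {B : Set E} {M C : ℝ} {q₀ x h : E}
    {y z : ℝ → R} (hB : Convex ℝ B) (hA : HasC11BoundOn A B M) (flat : IsFlatOn A B)
    (hq₀ : q₀ ∈ B) (hx : q₀ + x ∈ B) (hxh : q₀ + (x + h) ∈ B) (hxh₁ : ‖x + h‖ ≤ 1)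
    (hy : IsRadialSolution A q₀ x y) (hz : IsRadialSolution A q₀ (x + h) z)
    (hC : ∀ t ∈ Icc (0 : ℝ) 1, ‖y t‖ ≤ C) :
    ‖z 1 - y 1 - A (q₀ + x) h * y 1‖ ≤
      gronwallBound 0 M (2 * M * C + 2 * M * M * C) 1 * ‖h‖ ^ 2 := by
  have hray : ∀ t ∈ Icc (0 : ℝ) 1, q₀ + t • x ∈ B := fun t ht => hB.add_smul_mem hq₀ hx ht
  have hray' : ∀ t ∈ Icc (0 : ℝ) 1, q₀ + t • x + t • h ∈ B := fun t ht => by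
    simpa only [smul_add, add_assoc] using hB.add_smul_mem hq₀ hxh ht
  have deriv := fun t ht =>
    hy.hasDerivWithinAt_radialDefect hz ht (hA.differentiableAt _ (hray t ht))
  have gronwall := norm_le_gronwallBound_of_norm_deriv_right_le (δ := 0) (K := M)
    (ε := (2 * M * C + 2 * M * M * C) * ‖h‖ ^ 2)
    (fun t ht => (deriv t ht).continuousWithinAt)
    (fun t ht => (deriv t (Ico_subset_Icc_self ht)).mono_of_mem_nhdsWithin
      (Icc_mem_nhdsGE_of_mem ht))
    (by simp [radialDefect, hy.apply_zero, hz.apply_zero])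
    (fun t ht => ?_) 1 (by simp)
  · refine (by simpa [radialDefect] using gronwall : _ ≤ _).trans_eq ?_
    unfold gronwallBound
    split_ifs
    · simp
    · simp only [zero_mul, zero_add]
      ring
  · replace ht := Ico_subset_Icc_self ht
    have hk : ‖t • h‖ ≤ ‖h‖ := by
      rw [norm_smul, Real.norm_of_nonneg ht.1]
      exact mul_le_of_le_one_left (norm_nonneg _) ht.2
    exact norm_radialDefect_deriv_le (flat _ (hray t ht) _ _) (hA.norm_le _ (hray t ht))
      (hA.norm_le _ (hray' t ht)) (hA.norm_fderiv_le _ (hray t ht))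
      (hA.norm_sub_le hB (hray t ht) (hray' t ht))
      (hA.norm_sub_sub_fderiv_le hB (hray t ht) (hray' t ht)) hk hxh₁ (z t) (hC t ht)

lemma isParallelOn_of_isRadialSolution {A : E → E →L[ℝ] R} {B : Set E} {M : ℝ} {q₀ : E}
    {y : E → ℝ → R} (hBo : IsOpen B) (hB : Convex ℝ B) (hB₁ : ∀ p ∈ B, ‖p - q₀‖ ≤ 1)
    (hq₀ : q₀ ∈ B) (hA : HasC11BoundOn A B M) (flat : IsFlatOn A B)
    (hy : ∀ p ∈ B, IsRadialSolution A q₀ (p - q₀) (y p)) :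
    IsParallelOn A (fun p => y p 1) B := by
  intro p hp
  obtain ⟨C, hC⟩ := isCompact_Icc.exists_bound_of_continuousOn
    (fun t ht => ((hy p hp).hasDerivWithinAt t ht).continuousWithinAt)
  have hquad : (fun h : E => ‖h‖ ^ 2) =o[𝓝 0] fun h => h :=
    Asymptotics.isLittleO_norm_pow_id one_lt_two
  refine hasFDerivAt_iff_isLittleO_nhds_zero.2 (Asymptotics.IsBigO.trans_isLittleO ?_ hquad)
  refine Asymptotics.IsBigO.of_bound (gronwallBound 0 M (2 * M * C + 2 * M * M * C) 1) ?_
  have hmem : ∀ᶠ h in 𝓝 (0 : E), p + h ∈ B :=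
    ((continuous_const_add p).tendsto' 0 p (add_zero p)).eventually_mem (hBo.mem_nhds hp)
  filter_upwards [hmem] with h hph
  have hsub : p + h - q₀ = p - q₀ + h := add_sub_right_comm p h q₀
  have hz := hy (p + h) hph
  have hph₁ := hB₁ (p + h) hph
  rw [hsub] at hz hph₁
  simpa using (hy p hp).norm_sub_sub_le hB hA flat hq₀ (by simpa) (by simpa [← add_assoc]) hph₁
    hz hC

lemma HasC11BoundOn.exists_isParallelOn_ball [CompleteSpace R] {A : E → E →L[ℝ] R} {q : E} {ρ M : ℝ}
    (hρ : 0 < ρ) (hA : HasC11BoundOn A (ball q ρ) M) (flat : IsFlatOn A (ball q ρ)) :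
    ∃ r > 0, ∃ Y : E → R, Y q = 1 ∧ IsParallelOn A Y (ball q r) := by
  have hM : 0 ≤ M := (norm_nonneg _).trans (hA.norm_le q (mem_ball_self hρ))
  obtain ⟨r, hr, hrρ, hr₁, hrM⟩ : ∃ r > 0, r ≤ ρ ∧ r ≤ 1 ∧ r ≤ 1 / (2 * (M + 1)) :=
    ⟨min ρ (min 1 (1 / (2 * (M + 1)))), by positivity, by simp⟩
  have hsub : ball q r ⊆ ball q ρ := ball_subset_ball hrρ
  have hnorm : ∀ p ∈ ball q r, ‖p - q‖ ≤ r := fun p hp => (mem_ball_iff_norm.1 hp).le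
  have hsmall : ∀ p ∈ ball q r, M * ‖p - q‖ ≤ 1 / 2 := fun p hp => by
    calc M * ‖p - q‖ ≤ (M + 1) * (1 / (2 * (M + 1))) := by
          gcongr
          · linarith
          · exact (hnorm p hp).trans hrM
      _ = 1 / 2 := by field_simp
  have hradial : ∀ p ∈ ball q r, ∃ y, IsRadialSolution A q (p - q) y := fun p hp =>
    exists_isRadialSolution (convex_ball q r) (hA.mono hsub) (mem_ball_self hr) (by simpa)
      (hsmall p hp)
  choose! y hy using hradial
  refine ⟨r, hr, fun p => y p 1, ?_, isParallelOn_of_isRadialSolution isOpen_ball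
    (convex_ball q r) (fun p hp => (hnorm p hp).trans hr₁) (mem_ball_self hr) (hA.mono hsub)
    (fun p hp => flat p (hsub hp)) hy⟩
  exact (sub_self q ▸ hy q (mem_ball_self hr)).apply_one_of_zero

lemma exists_units_isParallelOn_ball [CompleteSpace R] {A : E → E →L[ℝ] R} {U : Set E} {q : E}
    (hU : U ∈ 𝓝 q) (hA : ContDiffAt ℝ 2 A q) (flat : IsFlatOn A U) :
    ∃ r > 0, ∃ Φ : E → Rˣ, IsParallelOn A (fun p => (Φ p : R)) (ball q r) := by
  obtain ⟨r₁, hr₁, hU'⟩ := Metric.mem_nhds_iff.1 hU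
  obtain ⟨r₂, hr₂, M, hM⟩ := exists_hasC11BoundOn_ball hA
  obtain ⟨r, hr, Y, hYq, hY⟩ :=
    (hM.mono (ball_subset_ball (min_le_right r₁ r₂))).exists_isParallelOn_ball (lt_min hr₁ hr₂)
      fun p hp => flat p (hU' (ball_subset_ball (min_le_left r₁ r₂) hp))
  have hunit : ∀ᶠ p in 𝓝 q, IsUnit (Y p) :=
    (hY q (mem_ball_self hr)).continuousAt.eventually_mem (Units.isOpen.mem_nhds (by simp [hYq]))
  obtain ⟨r', hr', hball⟩ := Metric.mem_nhds_iff.1 (hunit.and (ball_mem_nhds q hr))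
  choose! Φ hΦ using fun p (hp : p ∈ ball q r') => (hball hp).1
  refine ⟨r', hr', Φ, fun p hp => ?_⟩
  have hder := (hY p (hball hp).2).congr_of_eventuallyEq
    (eventually_of_mem (isOpen_ball.mem_nhds hp) hΦ)
  rwa [← hΦ p hp] at hder

lemma IsParallelOn.exists_inv_mul_eq [CompleteSpace R] {A : E → E →L[ℝ] R} {W : Set E} {Φ : E → Rˣ}
    {Y : E → R} (hW : IsOpen W) (hW' : IsPreconnected W)
    (hΦ : IsParallelOn A (fun p => (Φ p : R)) W) (hY : IsParallelOn A Y W) :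
    ∃ c, ∀ p ∈ W, ↑(Φ p)⁻¹ * Y p = c := by
  have hder : ∀ p ∈ W, HasFDerivAt (fun p => ↑(Φ p)⁻¹ * Y p) (0 : E →L[ℝ] R) p := by
    intro p hp
    have hinv := (hasFDerivAt_ringInverse (𝕜 := ℝ) (Φ p)).comp p (hΦ p hp)
    simp only [Function.comp_def, Ring.inverse_unit] at hinv
    refine (hinv.mul' (hY p hp)).congr_fderiv ?_
    ext h
    simp [mul_assoc]
  exact hW.exists_is_const_of_fderiv_eq_zero (𝕜 := ℝ) hW'
    (fun p hp => (hder p hp).differentiableAt.differentiableWithinAt)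
    (fun p hp => (hder p hp).fderiv)

lemma IsParallelOn.contDiffOn {A : E → E →L[ℝ] R} {Y : E → R} {U : Set E} (hU : IsOpen U)
    (hY : IsParallelOn A Y U) {n : ℕ∞} (hA : ContDiffOn ℝ n A U) : ContDiffOn ℝ n Y U := by
  rw [contDiffOn_iff_forall_nat_le]
  intro m hm
  induction m with
  | zero => exact contDiffOn_zero.2 fun p hp => (hY p hp).continuousAt.continuousWithinAt
  | succ m ih =>
    have hm' : (m : ℕ∞) ≤ n := (by exact_mod_cast m.le_succ : (m : ℕ∞) ≤ (m + 1 : ℕ)).trans hm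
    have hderiv : ContDiffOn ℝ m (fun p => A p <• Y p) U :=
      ((ContinuousLinearMap.mul ℝ R).flip.contDiff.comp_contDiffOn (ih hm')).clm_comp
        (hA.of_le (by exact_mod_cast hm'))
    push_cast
    rw [contDiffOn_succ_iff_fderiv_of_isOpen hU]
    exact ⟨fun p hp => (hY p hp).differentiableAt.differentiableWithinAt, by simp,
      hderiv.congr fun p hp => (hY p hp).fderiv⟩

end LinearTotalDifferentialEquations

section FlatBundles

open Set Filter Topology

variable {ι X F G : Type*} [TopologicalSpace X] [Group G] [MulAction G F]
  {B : ι → Set X} {Φ : ι → X → G}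

/-- The flat bundle with fibre `F` whose transition functions `(Φ j)⁻¹ * Φ i` are locally
constant. The fibre is discrete, so that the continuous sections are the parallel ones. -/
def flatBundleCore [TopologicalSpace F] [DiscreteTopology F] (hB : ∀ i, IsOpen (B i))
    (cover : ∀ x, ∃ i, x ∈ B i)
    (hΦ : ∀ i j, ∀ x ∈ B i ∩ B j, ∀ᶠ y in 𝓝 x, (Φ j y)⁻¹ * Φ i y = (Φ j x)⁻¹ * Φ i x) :
    FiberBundleCore ι X F where
  baseSet := B
  isOpen_baseSet := hB
  indexAt x := (cover x).choose
  mem_baseSet_at x := (cover x).choose_spec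
  coordChange i j x w := ((Φ j x)⁻¹ * Φ i x) • w
  coordChange_self i x _ w := by simp
  continuousOn_coordChange i j := by
    rintro ⟨x, w⟩ ⟨hx, -⟩
    have hconst : ∀ᶠ z : X × F in 𝓝 (x, w),
        ((Φ j x)⁻¹ * Φ i x) • z.2 = ((Φ j z.1)⁻¹ * Φ i z.1) • z.2 :=
      (continuousAt_fst.eventually (hΦ i j x hx)).mono fun z hz => by rw [hz]
    exact ((continuous_of_discreteTopology.comp continuous_snd).continuousAt.congr
      hconst).continuousWithinAt
  coordChange_comp i j k x _ w := by
    simp only [smul_smul, mul_assoc, mul_inv_cancel_left]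

/-- Parallel sections of a flat bundle lift the identity through a covering map. -/
lemma exists_parallel_section [SimplyConnectedSpace X] [LocallyPathConnectedSpace X]
    (hB : ∀ i, IsOpen (B i)) (cover : ∀ x, ∃ i, x ∈ B i)
    (hΦ : ∀ i j, ∀ x ∈ B i ∩ B j, ∀ᶠ y in 𝓝 x, (Φ j y)⁻¹ * Φ i y = (Φ j x)⁻¹ * Φ i x)
    (x₀ : X) (v₀ : F) :
    ∃ v : X → F, v x₀ = v₀ ∧
      ∀ i, ∀ x ∈ B i, ∀ᶠ y in 𝓝 x, (Φ i y)⁻¹ • v y = (Φ i x)⁻¹ • v x := by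
  let : TopologicalSpace F := ⊥
  have : DiscreteTopology F := ⟨rfl⟩
  let Z : FiberBundleCore ι X F := flatBundleCore hB cover hΦ
  have hcov : IsCoveringMap (Bundle.TotalSpace.proj : Bundle.TotalSpace F Z.Fiber → X) :=
    FiberBundle.isCoveringMap
  obtain ⟨s, ⟨hs₀, hs⟩, -⟩ := hcov.existsUnique_continuousMap_lifts (ContinuousMap.id X) x₀
    ⟨x₀, (Φ (Z.indexAt x₀) x₀)⁻¹ • v₀⟩ rfl
  have hproj : ∀ x, (s x).1 = x := congrFun hs
  let fibreCoord : Bundle.TotalSpace F Z.Fiber → F := fun z => z.2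
  let v : X → F := fun x => Φ (Z.indexAt x) x • fibreCoord (s x)
  have hv : ∀ i x, (Z.localTriv i (s x)).2 = (Φ i x)⁻¹ • v x := fun i x => by
    change ((Φ i (s x).1)⁻¹ * Φ (Z.indexAt (s x).1) (s x).1) • fibreCoord (s x) = _
    rw [hproj, mul_smul]
  refine ⟨v, ?_, fun i x hx => ?_⟩
  · change Φ _ x₀ • fibreCoord (s x₀) = v₀
    rw [hs₀]
    exact smul_inv_smul _ _
  · have hcont : ContinuousAt (fun y => (Z.localTriv i (s y)).2) x := by
      have hsource : s x ∈ (Z.localTriv i).source := by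
        rwa [Z.mem_localTriv_source, hproj]
      exact continuousAt_snd.comp
        (((Z.localTriv i).continuousAt hsource).comp s.continuous.continuousAt)
    simp only [hv] at hcont
    exact hcont.eventually_mem ((isOpen_discrete {(Φ i x)⁻¹ • v x}).mem_nhds rfl)

end FlatBundles

section GlobalSolutions

open Set Filter Topology Metric
open scoped RightActions

variable {E R : Type*} [NormedAddCommGroup E] [NormedSpace ℝ E] [NormedRing R] [NormedAlgebra ℝ R]

theorem exists_isParallelOn [CompleteSpace R] {U : Set E} (hU : IsOpen U) [SimplyConnectedSpace U]
    {A : E → E →L[ℝ] R} (hA : ContDiffOn ℝ 2 A U) (flat : IsFlatOn A U) {q₀ : E} (hq₀ : q₀ ∈ U) :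
    ∃ Y : E → R, Y q₀ = 1 ∧ IsParallelOn A Y U := by
  choose r hr Φ hΦ using fun i : U =>
    exists_units_isParallelOn_ball (hU.mem_nhds i.2) (hA.contDiffAt (hU.mem_nhds i.2)) flat
  let B : U → Set U := fun i => (↑) ⁻¹' ball (i : E) (r i)
  have transition : ∀ i j, ∀ x ∈ B i ∩ B j, ∀ᶠ y : U in 𝓝 x,
      (Φ j y)⁻¹ * Φ i y = (Φ j x)⁻¹ * Φ i x := by
    intro i j x hx
    have hW : IsOpen (ball (i : E) (r i) ∩ ball (j : E) (r j)) := isOpen_ball.inter isOpen_ball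
    obtain ⟨c, hc⟩ := IsParallelOn.exists_inv_mul_eq hW
      ((convex_ball _ _).inter (convex_ball _ _)).isPreconnected
      (fun p hp => hΦ j p hp.2) (fun p hp => hΦ i p hp.1)
    filter_upwards [(hW.preimage continuous_subtype_val).mem_nhds hx] with y hy
    ext
    simpa using (hc y hy).trans (hc x hx).symm
  have : LocallyPathConnectedSpace U := hU.locallyPathConnectedSpace
  obtain ⟨v, hv₀, hv⟩ := exists_parallel_section (X := U) (F := R) (Φ := fun i x => Φ i x)
    (fun i => isOpen_ball.preimage continuous_subtype_val) (fun x => ⟨x, mem_ball_self (hr x)⟩)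
    transition ⟨q₀, hq₀⟩ 1
  refine ⟨Function.extend (↑) v 0, ?_, fun p hp => ?_⟩
  · rw [← hv₀]
    exact Subtype.val_injective.extend_apply v 0 ⟨q₀, hq₀⟩
  let i : U := ⟨p, hp⟩
  have hlocal : Function.extend (↑) v 0 =ᶠ[𝓝 p] fun q => Φ i q * ((Φ i p)⁻¹ • v i) := by
    rw [EventuallyEq, ← map_nhds_subtype_coe_eq_nhds hp (hU.mem_nhds hp), eventually_map]
    filter_upwards [hv i i (mem_ball_self (hr i))] with y hy
    rw [Subtype.val_injective.extend_apply, ← hy, Units.smul_def, smul_eq_mul,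
      Units.mul_inv_cancel_left]
  have hder := (hΦ i p (mem_ball_self (hr i))).mul_const' ((Φ i p)⁻¹ • v i)
  refine (hder.congr_of_eventuallyEq hlocal).congr_fderiv ?_
  rw [hlocal.self_of_nhds]
  ext h
  simp [mul_assoc]

end GlobalSolutions

section MovingFrames

open Set

variable {E W : Type*} [NormedAddCommGroup E] [NormedSpace ℝ E]
  [NormedAddCommGroup W] [NormedSpace ℝ W]

/-- The exterior derivative of a `1`-form, evaluated on constant vector fields `h`, `k`. -/
def oneFormExtDeriv (α : E → E →L[ℝ] ℝ) (p h k : E) : ℝ :=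
  fderiv ℝ α p h k - fderiv ℝ α p k h

/-- The wedge product of two covectors, evaluated on vectors `h`, `k`. -/
def covectorWedge (α β : E →L[ℝ] ℝ) (h k : E) : ℝ :=
  α h * β k - α k * β h

lemma fderiv_sum_smulRight_apply {κ F : Type*} [Fintype κ] [NormedAddCommGroup F]
    [NormedSpace ℝ F] {α : κ → E → E →L[ℝ] ℝ} {p : E} (hα : ∀ m, DifferentiableAt ℝ (α m) p)
    (T : κ → F) (h : E) :
    fderiv ℝ (fun q => ∑ m, (α m q).smulRight (T m)) p h =
      ∑ m, (fderiv ℝ (α m) p h).smulRight (T m) := by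
  have hsum := HasFDerivAt.fun_sum (u := Finset.univ) fun m _ =>
    ((ContinuousLinearMap.smulRightL ℝ E F).flip (T m)).hasFDerivAt.comp p (hα m).hasFDerivAt
  exact congr($(hsum.fderiv) h).trans (sum_apply _ _ _)

section LinearSystems

variable {ι : Type*} [Fintype ι] [DecidableEq ι]

/-- The operator-valued `1`-form on `W^ι` given by a matrix of scalar `1`-forms. -/
def matrixForm (W : Type*) [NormedAddCommGroup W] [NormedSpace ℝ W] (Ω : ι → ι → E →L[ℝ] ℝ) :
    E →L[ℝ] (ι → W) →L[ℝ] (ι → W) :=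
  ∑ ij : ι × ι, (Ω ij.1 ij.2).smulRight
    (ContinuousLinearMap.single ℝ (fun _ => W) ij.1 ∘L ContinuousLinearMap.proj ij.2)

lemma matrixForm_apply (Ω : ι → ι → E →L[ℝ] ℝ) (h : E) (w : ι → W) (i : ι) :
    matrixForm W Ω h w i = ∑ j, Ω i j h • w j := by
  simp [matrixForm, Fintype.sum_prod_type, Pi.single_apply]

lemma fderiv_matrixForm {Ω : ι → ι → E → E →L[ℝ] ℝ} {p : E}
    (hΩ : ∀ i j, DifferentiableAt ℝ (Ω i j) p) (h : E) :
    fderiv ℝ (fun q => matrixForm W fun i j => Ω i j q) p h =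
      matrixForm W fun i j => fderiv ℝ (Ω i j) p h := by
  unfold matrixForm
  rw [fderiv_sum_smulRight_apply fun ij : ι × ι => hΩ ij.1 ij.2]

lemma isFlatOn_matrixForm {U : Set E} {Ω : ι → ι → E → E →L[ℝ] ℝ}
    (hΩ : ∀ i j, ∀ p ∈ U, DifferentiableAt ℝ (Ω i j) p)
    (structureEq : ∀ i j, ∀ p ∈ U, ∀ h k,
      oneFormExtDeriv (Ω i j) p h k = ∑ l, covectorWedge (Ω i l p) (Ω l j p) h k) :
    IsFlatOn (fun p => matrixForm W fun i j => Ω i j p) U := by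
  intro p hp h k
  rw [fderiv_matrixForm (fun i j => hΩ i j p hp), fderiv_matrixForm (fun i j => hΩ i j p hp)]
  ext w i
  have component : ∀ j, fderiv ℝ (Ω i j) p h k + ∑ l, Ω i l p k * Ω l j p h =
      fderiv ℝ (Ω i j) p k h + ∑ l, Ω i l p h * Ω l j p k := fun j => by
    have hj := structureEq i j p hp h k
    simp only [oneFormExtDeriv, covectorWedge, Finset.sum_sub_distrib] at hj
    linarith
  have product : ∀ a b : E, ∑ l, Ω i l p a • ∑ j, Ω l j p b • w j =
      ∑ j, (∑ l, Ω i l p a * Ω l j p b) • w j := fun a b => by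
    simp only [Finset.smul_sum, Finset.sum_smul, smul_smul]
    exact Finset.sum_comm
  simp [matrixForm_apply, product, ← Finset.sum_add_distrib, ← add_smul, component]

end LinearSystems

theorem exists_linear_system_solution {ι : Type*} [Fintype ι] [CompleteSpace W] {U : Set E}
    (hU : IsOpen U) [SimplyConnectedSpace U] {n : ℕ∞} (hn : 2 ≤ n) {Ω : ι → ι → E → E →L[ℝ] ℝ}
    (hΩ : ∀ i j, ContDiffOn ℝ n (Ω i j) U)
    (structureEq : ∀ i j, ∀ p ∈ U, ∀ h k,
      oneFormExtDeriv (Ω i j) p h k = ∑ l, covectorWedge (Ω i l p) (Ω l j p) h k)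
    {q₀ : E} (hq₀ : q₀ ∈ U) (y₀ : ι → W) :
    ∃ y : ι → E → W, (∀ i, y i q₀ = y₀ i) ∧ (∀ i, ContDiffOn ℝ n (y i) U) ∧
      ∀ i, ∀ p ∈ U, HasFDerivAt (y i) (∑ j, (Ω i j p).smulRight (y j p)) p := by
  classical
  have hn₂ : (2 : WithTop ℕ∞) ≤ n := WithTop.coe_le_coe.2 hn
  have smooth : ContDiffOn ℝ n (fun p => matrixForm W fun i j => Ω i j p) U :=
    ContDiffOn.sum fun ij _ => (hΩ ij.1 ij.2).smulRight contDiffOn_const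
  have flat := isFlatOn_matrixForm (W := W) (fun i j p hp => ((hΩ i j).contDiffAt
    (hU.mem_nhds hp)).differentiableAt (two_pos.trans_le hn₂).ne') structureEq
  obtain ⟨Y, hY₀, hY⟩ := exists_isParallelOn hU (smooth.of_le hn₂) flat hq₀
  let evalAt : ι → ((ι → W) →L[ℝ] (ι → W)) →L[ℝ] W := fun i =>
    ContinuousLinearMap.proj i ∘L ContinuousLinearMap.apply ℝ (ι → W) y₀
  refine ⟨fun i p => Y p y₀ i, fun i => by simp [hY₀],
    fun i => (evalAt i).contDiff.comp_contDiffOn (hY.contDiffOn hU smooth), fun i p hp => ?_⟩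
  refine ((evalAt i).hasFDerivAt.comp p (hY p hp)).congr_fderiv ?_
  ext h
  simp [evalAt, matrixForm_apply]

variable {n : Type*} [Fintype n] [DecidableEq n]

lemma frame_mem_orthogonalGroup {U : Set E} (hU : IsOpen U) (hU' : IsPreconnected U)
    {ω : n → n → E → E →L[ℝ] ℝ} (skew : ∀ i j, ∀ p ∈ U, ω i j p = -ω j i p) {e : n → E → n → ℝ}
    (he : ∀ i, ∀ p ∈ U, HasFDerivAt (e i) (∑ j, (ω i j p).smulRight (e j p)) p) {q₀ : E}
    (hq₀ : q₀ ∈ U) (he₀ : (Matrix.of fun i => e i q₀) ∈ Matrix.orthogonalGroup n ℝ) {p : E}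
    (hp : p ∈ U) : (Matrix.of fun i => e i p) ∈ Matrix.orthogonalGroup n ℝ := by
  have coord : ∀ i x, ∀ p ∈ U,
      HasFDerivAt (fun q => e i q x) (∑ j, e j p x • ω i j p) p := fun i x p hp => by
    refine (hasFDerivAt_pi'.1 (he i p hp) x).congr_fderiv ?_
    ext h
    simp [mul_comm]
  have gram : ∀ x y, ∀ p ∈ U,
      HasFDerivAt (fun q => ∑ i, e i q x * e i q y) (0 : E →L[ℝ] ℝ) p := fun x y p hp => by
    refine (HasFDerivAt.fun_sum fun i _ => (coord i x p hp).mul (coord i y p hp)).congr_fderiv ?_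
    ext h
    have swap : ∑ i, ∑ j, e i p x * (e j p y * ω i j p h) =
        -∑ i, ∑ j, e i p y * (e j p x * ω i j p h) := by
      rw [Finset.sum_comm, ← Finset.sum_neg_distrib]
      refine Finset.sum_congr rfl fun i _ => ?_
      rw [← Finset.sum_neg_distrib]
      refine Finset.sum_congr rfl fun j _ => ?_
      rw [skew j i p hp, _root_.neg_apply]
      ring
    simp [Finset.sum_add_distrib, Finset.mul_sum, swap]
  rw [Matrix.mem_orthogonalGroup_iff'] at he₀ ⊢
  rw [← he₀]
  ext x y
  exact hU.is_const_of_fderiv_eq_zero (𝕜 := ℝ) hU'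
    (fun q hq => (gram x y q hq).differentiableAt.differentiableWithinAt)
    (fun q hq => (gram x y q hq).fderiv) hp hq₀

theorem exists_moving_frame {U : Set E} (hU : IsOpen U) [SimplyConnectedSpace U] {r : ℕ∞}
    (hr : 2 ≤ r) {ω : n → n → E → E →L[ℝ] ℝ} {τ : n → E → E →L[ℝ] ℝ}
    (hω : ∀ i j, ContDiffOn ℝ r (ω i j) U) (hτ : ∀ j, ContDiffOn ℝ r (τ j) U)
    (skew : ∀ i j, ∀ p ∈ U, ω i j p = -ω j i p)
    (dω : ∀ i j, ∀ p ∈ U, ∀ h k,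
      oneFormExtDeriv (ω i j) p h k = ∑ l, covectorWedge (ω i l p) (ω l j p) h k)
    (dτ : ∀ j, ∀ p ∈ U, ∀ h k,
      oneFormExtDeriv (τ j) p h k = ∑ l, covectorWedge (τ l p) (ω l j p) h k) :
    ∃ (f : E → n → ℝ) (e : n → E → n → ℝ), ContDiffOn ℝ r f U ∧ (∀ i, ContDiffOn ℝ r (e i) U) ∧
      (∀ p ∈ U, (Matrix.of fun i => e i p) ∈ Matrix.orthogonalGroup n ℝ) ∧
      (∀ p ∈ U, HasFDerivAt f (∑ j, (τ j p).smulRight (e j p)) p) ∧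
      ∀ i, ∀ p ∈ U, HasFDerivAt (e i) (∑ j, (ω i j p).smulRight (e j p)) p := by
  obtain ⟨q₀, hq₀⟩ : U.Nonempty := nonempty_coe_sort.1 inferInstance
  have hU' : IsPreconnected U := isPreconnected_iff_preconnectedSpace.2 inferInstance
  let Ω : Option n → Option n → E → E →L[ℝ] ℝ
    | some i, some j => ω i j
    | none, some j => τ j
    | _, none => 0
  have hΩ : ∀ i j, ContDiffOn ℝ r (Ω i j) U := by
    rintro (_ | i) (_ | j)
    exacts [contDiffOn_const, hτ j, contDiffOn_const, hω i j]
  have dΩ : ∀ i j, ∀ p ∈ U, ∀ h k,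
      oneFormExtDeriv (Ω i j) p h k = ∑ l, covectorWedge (Ω i l p) (Ω l j p) h k := by
    rintro (_ | i) (_ | j) p hp h k
    · simp [Ω, oneFormExtDeriv, covectorWedge]
    · simpa [Ω, covectorWedge] using dτ j p hp h k
    · simp [Ω, oneFormExtDeriv, covectorWedge]
    · simpa [Ω, covectorWedge] using dω i j p hp h k
  obtain ⟨y, hy₀, hy, dy⟩ := exists_linear_system_solution hU hr hΩ dΩ hq₀
    (fun o : Option n => o.elim 0 fun i => (Pi.single i 1 : n → ℝ))
  have de : ∀ i, ∀ p ∈ U,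
      HasFDerivAt (y (some i)) (∑ j, (ω i j p).smulRight (y (some j) p)) p := fun i p hp => by
    simpa [Fintype.sum_option, Ω] using dy (some i) p hp
  have he₀ : (Matrix.of fun i => y (some i) q₀) ∈ Matrix.orthogonalGroup n ℝ := by
    have : Matrix.of (fun i => y (some i) q₀) = 1 := by
      ext i j
      simp [hy₀, Matrix.one_apply, Pi.single_apply, eq_comm]
    exact this ▸ one_mem _
  refine ⟨y none, fun i => y (some i), hy none, fun i => hy (some i),
    fun p hp => frame_mem_orthogonalGroup hU hU' skew de hq₀ he₀ hp, fun p hp => ?_, de⟩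
  simpa [Fintype.sum_option, Ω] using dy none p hp

end MovingFrames

section PlanarFrames

/-- The `1`-form `P du + Q dv` on the plane. -/
def planarForm (P Q : (Fin 2 → ℝ) → ℝ) (q : Fin 2 → ℝ) : (Fin 2 → ℝ) →L[ℝ] ℝ :=
  P q • ContinuousLinearMap.proj 0 + Q q • ContinuousLinearMap.proj 1

lemma planarForm_apply (P Q : (Fin 2 → ℝ) → ℝ) (q h : Fin 2 → ℝ) :
    planarForm P Q q h = P q * h 0 + Q q * h 1 := by
  simp [planarForm]

lemma contDiffOn_planarForm {P Q : (Fin 2 → ℝ) → ℝ} {U : Set (Fin 2 → ℝ)} {r : ℕ∞}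
    (hP : ContDiffOn ℝ r P U) (hQ : ContDiffOn ℝ r Q U) : ContDiffOn ℝ r (planarForm P Q) U :=
  (hP.smul contDiffOn_const).add (hQ.smul contDiffOn_const)

lemma fderiv_eq_pdr (g : (Fin 2 → ℝ) → ℝ) (q h : Fin 2 → ℝ) :
    fderiv ℝ g q h = pdr 0 g q * h 0 + pdr 1 g q * h 1 := by
  conv_lhs => rw [pi_eq_sum_univ' h]
  simp [pdr, mul_comm]

lemma pdr_neg {m : ℕ} (k : Fin m) (g : (Fin m → ℝ) → ℝ) (q : Fin m → ℝ) :
    pdr k (-g) q = -pdr k g q := by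
  simp [pdr, fderiv_neg]

lemma pdr_zero {m : ℕ} (k : Fin m) (q : Fin m → ℝ) : pdr k 0 q = 0 := by
  simp [pdr]

lemma oneFormExtDeriv_planarForm {P Q : (Fin 2 → ℝ) → ℝ} {q : Fin 2 → ℝ}
    (hP : DifferentiableAt ℝ P q) (hQ : DifferentiableAt ℝ Q q) (h k : Fin 2 → ℝ) :
    oneFormExtDeriv (planarForm P Q) q h k =
      (pdr 0 Q q - pdr 1 P q) * (h 0 * k 1 - h 1 * k 0) := by
  let du : (Fin 2 → ℝ) →L[ℝ] ℝ := ContinuousLinearMap.proj 0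
  let dv : (Fin 2 → ℝ) →L[ℝ] ℝ := ContinuousLinearMap.proj 1
  have hder : HasFDerivAt (planarForm P Q) _ q :=
    (hP.hasFDerivAt.smul_const du).add (hQ.hasFDerivAt.smul_const dv)
  rw [oneFormExtDeriv, hder.fderiv]
  simp only [_root_.add_apply, ContinuousLinearMap.smulRight_apply, fderiv_eq_pdr,
    _root_.smul_apply, ContinuousLinearMap.proj_apply, smul_eq_mul, du, dv]
  ring

lemma covectorWedge_planarForm (P Q P' Q' : (Fin 2 → ℝ) → ℝ) (q h k : Fin 2 → ℝ) :
    covectorWedge (planarForm P Q q) (planarForm P' Q' q) h k =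
      (P q * Q' q - Q q * P' q) * (h 0 * k 1 - h 1 * k 0) := by
  simp only [covectorWedge, planarForm_apply]
  ring

theorem exists_planar_moving_frame {n : Type*} [Fintype n] [DecidableEq n] {U : Set (Fin 2 → ℝ)}
    (hU : IsOpen U) [SimplyConnectedSpace U] {r : ℕ∞} (hr : 2 ≤ r)
    {P Q : n → n → (Fin 2 → ℝ) → ℝ} {S T : n → (Fin 2 → ℝ) → ℝ}
    (hP : ∀ i j, ContDiffOn ℝ r (P i j) U) (hQ : ∀ i j, ContDiffOn ℝ r (Q i j) U)
    (hS : ∀ j, ContDiffOn ℝ r (S j) U) (hT : ∀ j, ContDiffOn ℝ r (T j) U)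
    (skewP : ∀ i j, ∀ q ∈ U, P i j q = -P j i q) (skewQ : ∀ i j, ∀ q ∈ U, Q i j q = -Q j i q)
    (curvature : ∀ i j, ∀ q ∈ U, pdr 0 (Q i j) q - pdr 1 (P i j) q =
      ∑ l, (P i l q * Q l j q - Q i l q * P l j q))
    (torsion : ∀ j, ∀ q ∈ U, pdr 0 (T j) q - pdr 1 (S j) q =
      ∑ l, (S l q * Q l j q - T l q * P l j q)) :
    ∃ (f : (Fin 2 → ℝ) → n → ℝ) (e : n → (Fin 2 → ℝ) → n → ℝ),
      ContDiffOn ℝ r f U ∧ (∀ i, ContDiffOn ℝ r (e i) U) ∧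
      (∀ q ∈ U, (Matrix.of fun i => e i q) ∈ Matrix.orthogonalGroup n ℝ) ∧
      (∀ q ∈ U, ∀ X, fderiv ℝ f q X = ∑ j, (S j q * X 0 + T j q * X 1) • e j q) ∧
      ∀ i, ∀ q ∈ U, ∀ X, fderiv ℝ (e i) q X = ∑ j, (P i j q * X 0 + Q i j q * X 1) • e j q := by
  have diff : ∀ {g : (Fin 2 → ℝ) → ℝ}, ContDiffOn ℝ r g U → ∀ q ∈ U, DifferentiableAt ℝ g q :=
    fun hg q hq => (hg.contDiffAt (hU.mem_nhds hq)).differentiableAt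
      (two_pos.trans_le (WithTop.coe_le_coe.2 hr)).ne'
  have skew : ∀ i j, ∀ q ∈ U, planarForm (P i j) (Q i j) q = -planarForm (P j i) (Q j i) q := by
    intro i j q hq
    ext h
    simp only [planarForm_apply, _root_.neg_apply, skewP i j q hq, skewQ i j q hq]
    ring
  obtain ⟨f, e, hf, he, orth, df, de⟩ := exists_moving_frame hU hr
    (fun i j => contDiffOn_planarForm (hP i j) (hQ i j))
    (fun j => contDiffOn_planarForm (hS j) (hT j)) skew
    (fun i j q hq h k => by
      simp only [oneFormExtDeriv_planarForm (diff (hP i j) q hq) (diff (hQ i j) q hq),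
        covectorWedge_planarForm, ← Finset.sum_mul, curvature i j q hq])
    (fun j q hq h k => by
      simp only [oneFormExtDeriv_planarForm (diff (hS j) q hq) (diff (hT j) q hq),
        covectorWedge_planarForm, ← Finset.sum_mul, torsion j q hq])
  refine ⟨f, e, hf, he, orth, fun q hq X => ?_, fun i q hq X => ?_⟩
  · rw [(df q hq).fderiv]
    simp [planarForm_apply]
  · rw [(de i q hq).fderiv]
    simp [planarForm_apply]

end PlanarFrames

section PrincipalFrames

/-- At `q`, the map `f` with unit normal `ν` has an orthonormal tangent frame `e` in which the
coordinate directions are principal: `df = ∑ αₖ duₖ eₖ` and `dν = -∑ βₖ duₖ eₖ`. -/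
structure IsPrincipalFrameAt {m N : ℕ} (f ν : (Fin m → ℝ) → Fin N → ℝ) (e : Fin m → Fin N → ℝ)
    (α β : Fin m → ℝ) (q : Fin m → ℝ) : Prop where
  frame_dotProduct_frame : ∀ j k, e j ⬝ᵥ e k = if j = k then 1 else 0
  frame_dotProduct_normal : ∀ k, e k ⬝ᵥ ν q = 0
  normal_dotProduct_normal : ν q ⬝ᵥ ν q = 1
  fderiv_map : ∀ X, fderiv ℝ f q X = ∑ k, (α k * X k) • e k
  fderiv_normal : ∀ X, fderiv ℝ ν q X = -∑ k, (β k * X k) • e k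

namespace IsPrincipalFrameAt

section Forms

variable {m N : ℕ} {f ν : (Fin m → ℝ) → Fin N → ℝ} {e : Fin m → Fin N → ℝ} {α β q : Fin m → ℝ}

lemma pd_map (h : IsPrincipalFrameAt f ν e α β q) (k : Fin m) : pd k f q = α k • e k := by
  simp [pd, h.fderiv_map, Pi.single_apply]

lemma pd_normal (h : IsPrincipalFrameAt f ν e α β q) (k : Fin m) : pd k ν q = -(β k • e k) := by
  simp [pd, h.fderiv_normal, Pi.single_apply]

lemma pd_map_dotProduct_normal (h : IsPrincipalFrameAt f ν e α β q) (k : Fin m) :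
    pd k f q ⬝ᵥ ν q = 0 := by
  rw [h.pd_map, smul_dotProduct, h.frame_dotProduct_normal, smul_zero]

lemma pd_map_dotProduct_pd_map (h : IsPrincipalFrameAt f ν e α β q) (j k : Fin m) :
    pd j f q ⬝ᵥ pd k f q = if j = k then α j * α k else 0 := by
  simp [h.pd_map, h.frame_dotProduct_frame, mul_comm]

lemma pd_map_dotProduct_pd_normal (h : IsPrincipalFrameAt f ν e α β q) (j k : Fin m) :
    pd j f q ⬝ᵥ pd k ν q = -if j = k then α j * β k else 0 := by
  simp [h.pd_map, h.pd_normal, h.frame_dotProduct_frame, mul_comm]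

lemma pd_normal_dotProduct_pd_normal (h : IsPrincipalFrameAt f ν e α β q) (j k : Fin m) :
    pd j ν q ⬝ᵥ pd k ν q = if j = k then β j * β k else 0 := by
  simp [h.pd_normal, h.frame_dotProduct_frame, mul_comm]

lemma sum_smul_frame_eq_zero_iff (h : IsPrincipalFrameAt f ν e α β q) (x : Fin m → ℝ) :
    ∑ k, x k • e k = 0 ↔ ∀ k, x k = 0 := by
  refine ⟨fun hx k => ?_, fun hx => by simp [hx]⟩
  simpa [sum_dotProduct, h.frame_dotProduct_frame] using congr($hx ⬝ᵥ e k)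

lemma fderiv_map_eq_zero_iff (h : IsPrincipalFrameAt f ν e α β q) (X : Fin m → ℝ) :
    fderiv ℝ f q X = 0 ↔ ∀ k, α k * X k = 0 := by
  rw [h.fderiv_map, h.sum_smul_frame_eq_zero_iff]

lemma fderiv_normal_eq_zero_iff (h : IsPrincipalFrameAt f ν e α β q) (X : Fin m → ℝ) :
    fderiv ℝ ν q X = 0 ↔ ∀ k, β k * X k = 0 := by
  rw [h.fderiv_normal, neg_eq_zero, h.sum_smul_frame_eq_zero_iff]

lemma eq_zero_of_fderiv_eq_zero (h : IsPrincipalFrameAt f ν e α β q)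
    (hαβ : ∀ k, α k ≠ 0 ∨ β k ≠ 0) {X : Fin m → ℝ} (hf : fderiv ℝ f q X = 0)
    (hν : fderiv ℝ ν q X = 0) : X = 0 := by
  rw [h.fderiv_map_eq_zero_iff] at hf
  rw [h.fderiv_normal_eq_zero_iff] at hν
  ext k
  exact (hαβ k).elim (fun hk => (mul_eq_zero_iff_left hk).1 (hf k))
    fun hk => (mul_eq_zero_iff_left hk).1 (hν k)

lemma exists_fderiv_eq_zero_iff (h : IsPrincipalFrameAt f ν e α β q) :
    (∃ X, X ≠ 0 ∧ fderiv ℝ f q X = 0) ↔ ∃ k, α k = 0 := by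
  simp only [h.fderiv_map_eq_zero_iff]
  constructor
  · rintro ⟨X, hX, hαX⟩
    obtain ⟨k, hk⟩ := Function.ne_iff.1 hX
    exact ⟨k, (mul_eq_zero_iff_right hk).1 (hαX k)⟩
  · rintro ⟨k, hk⟩
    refine ⟨Pi.single k 1, by simp, fun j => ?_⟩
    obtain rfl | hj := eq_or_ne j k
    · simp [hk]
    · simp [hj]

end Forms

section Surfaces

variable {N : ℕ} {f ν : (Fin 2 → ℝ) → Fin N → ℝ} {e : Fin 2 → Fin N → ℝ} {α β q : Fin 2 → ℝ}

lemma not_umbilic (h : IsPrincipalFrameAt f ν e α β q) (hα : ∀ k, α k ≠ 0)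
    (hαβ : β 0 * α 1 ≠ β 1 * α 0) :
    ¬∃ c : ℝ,
      -(pd 0 f q ⬝ᵥ pd 0 ν q) = c * (pd 0 f q ⬝ᵥ pd 0 f q) ∧
      -(pd 0 f q ⬝ᵥ pd 1 ν q) = c * (pd 0 f q ⬝ᵥ pd 1 f q) ∧
      -(pd 1 f q ⬝ᵥ pd 1 ν q) = c * (pd 1 f q ⬝ᵥ pd 1 f q) := by
  rintro ⟨c, h₀, -, h₁⟩
  have curvature : ∀ k, -(pd k f q ⬝ᵥ pd k ν q) = c * (pd k f q ⬝ᵥ pd k f q) → β k = c * α k := by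
    intro k hk
    rw [h.pd_map_dotProduct_pd_normal, h.pd_map_dotProduct_pd_map, if_pos rfl, if_pos rfl] at hk
    exact mul_left_cancel₀ (hα k) (by linarith)
  apply hαβ
  rw [curvature 0 h₀, curvature 1 h₁]
  ring

lemma gaussianCurvature_eq (h : IsPrincipalFrameAt f ν e α β q) (hα : ∀ k, α k ≠ 0) :
    ((-(pd 0 f q ⬝ᵥ pd 0 ν q)) * (-(pd 1 f q ⬝ᵥ pd 1 ν q)) - (-(pd 0 f q ⬝ᵥ pd 1 ν q)) ^ 2) /
      ((pd 0 f q ⬝ᵥ pd 0 f q) * (pd 1 f q ⬝ᵥ pd 1 f q) - (pd 0 f q ⬝ᵥ pd 1 f q) ^ 2) =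
      (β 0 * β 1) / (α 0 * α 1) := by
  have h₀ := hα 0
  have h₁ := hα 1
  simp only [h.pd_map_dotProduct_pd_map, h.pd_map_dotProduct_pd_normal, if_true, zero_ne_one,
    if_false]
  field_simp
  ring

end Surfaces

end IsPrincipalFrameAt

theorem exists_principal_frame {U : Set (Fin 2 → ℝ)} (hU : IsOpen U) [SimplyConnectedSpace U]
    {r : ℕ∞} (hr : 2 ≤ r) {α β : Fin 2 → (Fin 2 → ℝ) → ℝ} {a b : (Fin 2 → ℝ) → ℝ}
    (hα : ∀ k, ContDiffOn ℝ r (α k) U) (hβ : ∀ k, ContDiffOn ℝ r (β k) U)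
    (ha : ContDiffOn ℝ r a U) (hb : ContDiffOn ℝ r b U)
    (torsion₀ : ∀ q ∈ U, pdr 1 (α 0) q = -(a q * α 1 q))
    (torsion₁ : ∀ q ∈ U, pdr 0 (α 1) q = b q * α 0 q)
    (codazzi₀ : ∀ q ∈ U, pdr 1 (β 0) q = -(a q * β 1 q))
    (codazzi₁ : ∀ q ∈ U, pdr 0 (β 1) q = b q * β 0 q)
    (gauss : ∀ q ∈ U, pdr 0 b q - pdr 1 a q = -(β 0 q * β 1 q)) :
    ∃ (f ν : (Fin 2 → ℝ) → Fin 3 → ℝ) (e : Fin 2 → (Fin 2 → ℝ) → Fin 3 → ℝ),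
      ContDiffOn ℝ r f U ∧ ContDiffOn ℝ r ν U ∧
      ∀ q ∈ U, IsPrincipalFrameAt f ν (fun k => e k q) (fun k => α k q) (fun k => β k q) q := by
  let P : Matrix (Fin 3) (Fin 3) ((Fin 2 → ℝ) → ℝ) := !![0, a, β 0; -a, 0, 0; -β 0, 0, 0]
  let Q : Matrix (Fin 3) (Fin 3) ((Fin 2 → ℝ) → ℝ) := !![0, b, 0; -b, 0, β 1; 0, -β 1, 0]
  let S : Fin 3 → (Fin 2 → ℝ) → ℝ := ![α 0, 0, 0]
  let T : Fin 3 → (Fin 2 → ℝ) → ℝ := ![0, α 1, 0]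
  have hzero : ContDiffOn ℝ r (0 : (Fin 2 → ℝ) → ℝ) U := contDiffOn_const
  have hP : ∀ i j, ContDiffOn ℝ r (P i j) U := by
    intro i j
    fin_cases i <;> fin_cases j
    exacts [hzero, ha, hβ 0, ha.neg, hzero, hzero, (hβ 0).neg, hzero, hzero]
  have hQ : ∀ i j, ContDiffOn ℝ r (Q i j) U := by
    intro i j
    fin_cases i <;> fin_cases j
    exacts [hzero, hb, hzero, hb.neg, hzero, hβ 1, hzero, (hβ 1).neg, hzero]
  have hS : ∀ j, ContDiffOn ℝ r (S j) U := by
    intro j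
    fin_cases j
    exacts [hα 0, hzero, hzero]
  have hT : ∀ j, ContDiffOn ℝ r (T j) U := by
    intro j
    fin_cases j
    exacts [hzero, hα 1, hzero]
  obtain ⟨f, e, hf, he, orth, df, de⟩ := exists_planar_moving_frame hU hr hP hQ hS hT
    (fun i j q _ => by fin_cases i <;> fin_cases j <;> simp [P])
    (fun i j q _ => by fin_cases i <;> fin_cases j <;> simp [Q])
    (fun i j q hq => by
      fin_cases i <;> fin_cases j <;> simp [P, Q, Fin.sum_univ_three, pdr_neg, pdr_zero] <;>
        linarith [codazzi₀ q hq, codazzi₁ q hq, gauss q hq])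
    (fun j q hq => by
      fin_cases j <;> simp [P, Q, S, T, Fin.sum_univ_three, pdr_zero] <;>
        linarith [torsion₀ q hq, torsion₁ q hq])
  have inner : ∀ q ∈ U, ∀ i j, e i q ⬝ᵥ e j q = (1 : Matrix (Fin 3) (Fin 3) ℝ) i j :=
    fun q hq i j => congr($((Matrix.mem_orthogonalGroup_iff _ _).1 (orth q hq)) i j)
  refine ⟨f, e 2, ![e 0, e 1], hf, he 2, fun q hq => ⟨fun j k => ?_, fun k => ?_, ?_, ?_, ?_⟩⟩
  · fin_cases j <;> fin_cases k <;> simp [inner q hq]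
  · fin_cases k <;> simp [inner q hq]
  · simp [inner q hq]
  · simp [df q hq, S, T, Fin.sum_univ_three]
  · simp [de 2 q hq, P, Q, Fin.sum_univ_three, add_comm]

end PrincipalFrames

section SinhGordon

lemma pdr_div_const {m : ℕ} (k : Fin m) (g : (Fin m → ℝ) → ℝ) (r : ℝ) (q : Fin m → ℝ) :
    pdr k (fun p => g p / r) q = pdr k g q / r := by
  have : (fun p => g p / r) = r⁻¹ • g := funext fun p => div_eq_inv_mul _ _
  rw [pdr, this, fderiv_const_smul_field, div_eq_inv_mul]
  rfl

lemma pdr_two_mul_sinh_half {m : ℕ} (k : Fin m) {θ : (Fin m → ℝ) → ℝ} {q : Fin m → ℝ}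
    (hθ : DifferentiableAt ℝ θ q) :
    pdr k (fun p => 2 * Real.sinh (θ p / 2)) q = 2 * Real.cosh (θ q / 2) * (pdr k θ q / 2) := by
  have hhalf : DifferentiableAt ℝ (fun p => θ p / 2) q := by fun_prop
  rw [← pdr_div_const, pdr, (hhalf.hasFDerivAt.sinh.const_mul 2).fderiv]
  simp [pdr, mul_assoc]

lemma pdr_two_mul_cosh_half {m : ℕ} (k : Fin m) {θ : (Fin m → ℝ) → ℝ} {q : Fin m → ℝ}
    (hθ : DifferentiableAt ℝ θ q) :
    pdr k (fun p => 2 * Real.cosh (θ p / 2)) q = 2 * Real.sinh (θ q / 2) * (pdr k θ q / 2) := by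
  have hhalf : DifferentiableAt ℝ (fun p => θ p / 2) q := by fun_prop
  rw [← pdr_div_const, pdr, (hhalf.hasFDerivAt.cosh.const_mul 2).fderiv]
  simp [pdr, mul_assoc]

lemma sinh_eq_two_mul_sinh_half_mul_cosh_half (x : ℝ) :
    Real.sinh x = 2 * Real.sinh (x / 2) * Real.cosh (x / 2) := by
  rw [← Real.sinh_two_mul, mul_div_cancel₀ x two_ne_zero]

lemma exists_sinhGordon_principal_frame {U : Set (Fin 2 → ℝ)} (hU : IsOpen U)
    [SimplyConnectedSpace U] {θ : (Fin 2 → ℝ) → ℝ} (hθ : ContDiffOn ℝ (⊤ : ℕ∞) θ U)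
    (hSG : ∀ q ∈ U, pdr 0 (pdr 0 θ) q + pdr 1 (pdr 1 θ) q = -4 * Real.sinh (θ q)) :
    ∃ (f ν : (Fin 2 → ℝ) → Fin 3 → ℝ) (e : Fin 2 → (Fin 2 → ℝ) → Fin 3 → ℝ),
      ContDiffOn ℝ (⊤ : ℕ∞) f U ∧ ContDiffOn ℝ (⊤ : ℕ∞) ν U ∧
      ∀ q ∈ U, IsPrincipalFrameAt f ν (fun k => e k q)
        ![2 * Real.cosh (θ q / 2), 2 * Real.sinh (θ q / 2)]
        ![2 * Real.sinh (θ q / 2), 2 * Real.cosh (θ q / 2)] q := by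
  let s : (Fin 2 → ℝ) → ℝ := fun q => 2 * Real.sinh (θ q / 2)
  let c : (Fin 2 → ℝ) → ℝ := fun q => 2 * Real.cosh (θ q / 2)
  let a : (Fin 2 → ℝ) → ℝ := -fun q => pdr 1 θ q / 2
  let b : (Fin 2 → ℝ) → ℝ := fun q => pdr 0 θ q / 2
  have hpdr : ∀ k, ContDiffOn ℝ (⊤ : ℕ∞) (pdr k θ) U := fun k =>
    (hθ.fderiv_of_isOpen hU (by simp)).clm_apply contDiffOn_const
  have hs : ContDiffOn ℝ (⊤ : ℕ∞) s U :=
    contDiffOn_const.mul (Real.contDiff_sinh.comp_contDiffOn (hθ.div_const 2))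
  have hc : ContDiffOn ℝ (⊤ : ℕ∞) c U :=
    contDiffOn_const.mul (Real.contDiff_cosh.comp_contDiffOn (hθ.div_const 2))
  have hθ' : ∀ q ∈ U, DifferentiableAt ℝ θ q := fun q hq =>
    (hθ.contDiffAt (hU.mem_nhds hq)).differentiableAt (by simp)
  have pdr_s : ∀ k, ∀ q ∈ U, pdr k s q = c q * (pdr k θ q / 2) := fun k q hq =>
    pdr_two_mul_sinh_half k (hθ' q hq)
  have pdr_c : ∀ k, ∀ q ∈ U, pdr k c q = s q * (pdr k θ q / 2) := fun k q hq =>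
    pdr_two_mul_cosh_half k (hθ' q hq)
  have gauss : ∀ q ∈ U, pdr 0 b q - pdr 1 a q = -(s q * c q) := fun q hq => by
    simp only [a, b, s, c, pdr_neg, pdr_div_const]
    linarith [hSG q hq, sinh_eq_two_mul_sinh_half_mul_cosh_half (θ q)]
  obtain ⟨f, ν, e, hf, hν, H⟩ := exists_principal_frame hU le_top (α := ![c, s]) (β := ![s, c])
    (Fin.forall_fin_two.2 ⟨hc, hs⟩) (Fin.forall_fin_two.2 ⟨hs, hc⟩)
    ((hpdr 1).div_const 2).neg ((hpdr 0).div_const 2)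
    (fun q hq => by simp [pdr_c 1 q hq, mul_comm]) (fun q hq => (pdr_s 0 q hq).trans (mul_comm _ _))
    (fun q hq => by simp [pdr_s 1 q hq, mul_comm]) (fun q hq => (pdr_c 0 q hq).trans (mul_comm _ _))
    gauss
  refine ⟨f, ν, e, hf, hν, fun q hq => ?_⟩
  convert H q hq using 1 <;> ext k <;> fin_cases k <;> rfl

end SinhGordon

/-- Realization of fronts of constant Gaussian curvature `1` in `ℝ³` from solutions of the
sinh-Gordon equation `θ_{uu} + θ_{vv} = −4 sinh θ`: there is a front `(f, ν)` without
umbilic points with `I = 4(cosh²(θ/2) du² + sinh²(θ/2) dv²)`,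
`II = 4 cosh(θ/2) sinh(θ/2) (du² + dv²)`, `III = 4(sinh²(θ/2) du² + cosh²(θ/2) dv²)`;
its singular set is `{θ = 0}` and its Gaussian curvature is `1` at regular points. -/
theorem sinh_gordon_realization (U : Set (Fin 2 → ℝ)) (hU : IsOpen U)
    (hconn : IsConnected U) (hsc : SimplyConnectedSpace U)
    (θ : (Fin 2 → ℝ) → ℝ) (hθ : ContDiffOn ℝ (⊤ : ℕ∞) θ U)
    (hSG : ∀ q ∈ U, pdr 0 (pdr 0 θ) q + pdr 1 (pdr 1 θ) q = -4 * Real.sinh (θ q)) :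
    ∃ f ν : (Fin 2 → ℝ) → (Fin 3 → ℝ),
      ContDiffOn ℝ (⊤ : ℕ∞) f U ∧ ContDiffOn ℝ (⊤ : ℕ∞) ν U ∧
      (∀ q ∈ U, ν q ⬝ᵥ ν q = 1) ∧
      (∀ q ∈ U, ∀ k : Fin 2, pd k f q ⬝ᵥ ν q = 0) ∧
      (∀ q ∈ U, ∀ X : Fin 2 → ℝ, fderiv ℝ f q X = 0 → fderiv ℝ ν q X = 0 → X = 0) ∧
      (∀ q ∈ U,
        pd 0 f q ⬝ᵥ pd 0 f q = 4 * Real.cosh (θ q / 2) ^ 2 ∧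
        pd 0 f q ⬝ᵥ pd 1 f q = 0 ∧
        pd 1 f q ⬝ᵥ pd 1 f q = 4 * Real.sinh (θ q / 2) ^ 2 ∧
        pd 0 f q ⬝ᵥ pd 0 ν q = -2 * Real.sinh (θ q) ∧
        pd 0 f q ⬝ᵥ pd 1 ν q = 0 ∧
        pd 1 f q ⬝ᵥ pd 0 ν q = 0 ∧
        pd 1 f q ⬝ᵥ pd 1 ν q = -2 * Real.sinh (θ q) ∧
        pd 0 ν q ⬝ᵥ pd 0 ν q = 4 * Real.sinh (θ q / 2) ^ 2 ∧
        pd 0 ν q ⬝ᵥ pd 1 ν q = 0 ∧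
        pd 1 ν q ⬝ᵥ pd 1 ν q = 4 * Real.cosh (θ q / 2) ^ 2) ∧
      (∀ q ∈ U, (∀ X : Fin 2 → ℝ, fderiv ℝ f q X = 0 → X = 0) →
        ¬∃ c : ℝ,
          -(pd 0 f q ⬝ᵥ pd 0 ν q) = c * (pd 0 f q ⬝ᵥ pd 0 f q) ∧
          -(pd 0 f q ⬝ᵥ pd 1 ν q) = c * (pd 0 f q ⬝ᵥ pd 1 f q) ∧
          -(pd 1 f q ⬝ᵥ pd 1 ν q) = c * (pd 1 f q ⬝ᵥ pd 1 f q)) ∧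
      (∀ q ∈ U, ((∃ X : Fin 2 → ℝ, X ≠ 0 ∧ fderiv ℝ f q X = 0) ↔ θ q = 0)) ∧
      (∀ q ∈ U, θ q ≠ 0 →
        ((-(pd 0 f q ⬝ᵥ pd 0 ν q)) * (-(pd 1 f q ⬝ᵥ pd 1 ν q))
            - (-(pd 0 f q ⬝ᵥ pd 1 ν q)) ^ 2) /
          ((pd 0 f q ⬝ᵥ pd 0 f q) * (pd 1 f q ⬝ᵥ pd 1 f q)
            - (pd 0 f q ⬝ᵥ pd 1 f q) ^ 2) = 1) := by
  obtain ⟨f, ν, e, hf, hν, H⟩ := exists_sinhGordon_principal_frame hU hθ hSG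
  have cosh_ne : ∀ q, 2 * Real.cosh (θ q / 2) ≠ 0 := fun q => by positivity
  have lengths_ne : ∀ q, θ q ≠ 0 →
      ∀ k, ![2 * Real.cosh (θ q / 2), 2 * Real.sinh (θ q / 2)] k ≠ 0 := fun q hq =>
    Fin.forall_fin_two.2 ⟨cosh_ne q, by simpa using hq⟩
  have singular : ∀ q ∈ U, (∃ X, X ≠ 0 ∧ fderiv ℝ f q X = 0) ↔ θ q = 0 := fun q hq => by
    simp [(H q hq).exists_fderiv_eq_zero_iff, (Real.cosh_pos _).ne']
  refine ⟨f, ν, hf, hν, fun q hq => (H q hq).normal_dotProduct_normal,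
    fun q hq => (H q hq).pd_map_dotProduct_normal,
    fun q hq X => (H q hq).eq_zero_of_fderiv_eq_zero
      (Fin.forall_fin_two.2 ⟨.inl (cosh_ne q), .inr (cosh_ne q)⟩),
    fun q hq => ?_, fun q hq hreg => ?_, singular, fun q hq hq₀ => ?_⟩
  · simp only [(H q hq).pd_map_dotProduct_pd_map, (H q hq).pd_map_dotProduct_pd_normal,
      (H q hq).pd_normal_dotProduct_pd_normal, sinh_eq_two_mul_sinh_half_mul_cosh_half (θ q),
      zero_ne_one, one_ne_zero, ↓reduceIte, Matrix.cons_val_zero, Matrix.cons_val_one]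
    refine ⟨?_, trivial, ?_, ?_, neg_zero, neg_zero, ?_, ?_, trivial, ?_⟩ <;> ring
  · have hq₀ : θ q ≠ 0 := fun h =>
      let ⟨X, hX, hfX⟩ := (singular q hq).2 h
      hX (hreg X hfX)
    refine (H q hq).not_umbilic (lengths_ne q hq₀) fun h => ?_
    have : 2 * Real.sinh (θ q / 2) * (2 * Real.sinh (θ q / 2)) =
        2 * Real.cosh (θ q / 2) * (2 * Real.cosh (θ q / 2)) := h
    nlinarith [Real.cosh_sq (θ q / 2)]
  · rw [(H q hq).gaussianCurvature_eq (lengths_ne q hq₀)]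
    exact div_eq_one_iff_eq (mul_ne_zero (cosh_ne q) (lengths_ne q hq₀ 1)) |>.2 (mul_comm _ _)
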